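/- arXiv:2006.12405 — 3 statements merged into one kernel-verified Lean document; each statement's English description precedes it below -/
import Mathlib

section
/- Let 𝒜 be a unital C*-algebra, 𝒮 ⊆ 𝒜 an operator system, and φ: 𝒮 → M_n(ℂ) a linear map. Then φ is decomposable if and only if for every positive integer m and every S ∈ J_m(𝒮), the matrix φ_m(S) = [φ(s_{jk})] is positive semidefinite. -/
/-!
A linear map `φ : S → Mₙ(ℂ)` is encoded by its dual functional `s_φ(X) = ∑ φ(xᵢⱼ)ᵢⱼ` on `Mₙ(S)`.
If `s_φ` is nonnegative on the positive matrices, then `φ` is completely positive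
(`isCPMap_ofFunc`): the quadratic form of `φₘ(s)` at a vector `v` is `s_φ(Vᴴ s V)`, where `V` is
the `m × n` scalar matrix with entries `v`.

Suppose `φₘ` is positive on every `Jₘ(S)`. Then `s_φ` is nonnegative on `Jₙ(S)`
(`dualFunc_nonneg`). On the graph `{(X, Xᵀ)}` of the partial transpose inside `Mₙ(S) ⊕ Mₙ(S)`, the
functional `(X, Xᵀ) ↦ s_φ(X)` is therefore nonnegative on the pairs of positive matrices. The
graph contains the order unit `(1, 1)`, so the M. Riesz extension theorem gives a positive
extension to the whole sum, that is, `s_φ(X) = f(X) + g(Xᵀ)` with `f` and `g` positive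
(`exists_splitting`). The functional `f` is dual to a completely positive map and `X ↦ g(Xᵀ)` to a
co-completely positive one, and their sum is `φ`.

The Riesz theorem is real. It is applied to real parts of functionals and to the cone of pairs with
positive real part (`reCone`), which avoids passing to self-adjoint parts.

For the converse, a decomposition `φ = ψ + η` is evaluated on `s ∈ Jₘ(S)`: `ψₘ(s)` is positive
because `s` is, and `ηₘ(s)` because the partial transpose of `s` is.
-/

open scoped ComplexOrder
open Matrix

/-- An element of a star ring is *positive* if it equals `star b * b` for some `b`;
in a (matrix algebra over a) C*-algebra this is the usual notion of positivity. -/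
def IsPosElem {R : Type*} [Ring R] [StarRing R] (x : R) : Prop :=
  ∃ b : R, x = star b * b

variable {A : Type*} [NormedRing A] [StarRing A] [CStarRing A]
  [CompleteSpace A] [NormedAlgebra ℂ A] [StarModule ℂ A]

/-- The canonical image in `Mₘ(𝒜)` of a matrix with entries in the operator system `S`. -/
def matCoe {S : Submodule ℂ A} {m : ℕ} (s : Matrix (Fin m) (Fin m) S) :
    Matrix (Fin m) (Fin m) A :=
  Matrix.of fun j k => (s j k : A)

/-- `J_m(S)`: matrices over `S` which are positive in `Mₘ(𝒜)` together with their
partial transpose. -/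
def memJ {S : Submodule ℂ A} {m : ℕ} (s : Matrix (Fin m) (Fin m) S) : Prop :=
  IsPosElem (matCoe s) ∧ IsPosElem (matCoe s)ᵀ

/-- A map `φ : S → Mₙ(ℂ)` is positive if it sends positive elements of `𝒜` lying in `S`
to positive semidefinite matrices. -/
def IsPosMap {S : Submodule ℂ A} {n : ℕ}
    (φ : S →ₗ[ℂ] Matrix (Fin n) (Fin n) ℂ) : Prop :=
  ∀ s : S, IsPosElem (s : A) → IsPosElem (φ s)

/-- Complete positivity of `φ : S → Mₙ(ℂ)`: every positive matrix over `S` is sent,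
entrywise, to a positive element of `Mₘ(Mₙ(ℂ))`. -/
def IsCPMap {S : Submodule ℂ A} {n : ℕ}
    (φ : S →ₗ[ℂ] Matrix (Fin n) (Fin n) ℂ) : Prop :=
  ∀ (m : ℕ) (s : Matrix (Fin m) (Fin m) S),
    IsPosElem (matCoe s) → IsPosElem (s.map ⇑φ)

/-- `φ` is co-completely positive if `transpose ∘ φ` is completely positive. -/
def IsCoCPMap {S : Submodule ℂ A} {n : ℕ}
    (φ : S →ₗ[ℂ] Matrix (Fin n) (Fin n) ℂ) : Prop :=
  ∀ (m : ℕ) (s : Matrix (Fin m) (Fin m) S),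
    IsPosElem (matCoe s) → IsPosElem (s.map fun a => (φ a)ᵀ)

/-- `φ` is decomposable if it is the sum of a completely positive and a
co-completely positive map. -/
noncomputable def IsDecomposable {S : Submodule ℂ A} {n : ℕ}
    (φ : S →ₗ[ℂ] Matrix (Fin n) (Fin n) ℂ) : Prop :=
  ∃ ψ η : S →ₗ[ℂ] Matrix (Fin n) (Fin n) ℂ,
    IsCPMap ψ ∧ IsCoCPMap η ∧ φ = ψ + η

/-- The dual functional `s_φ` on `Mₙ(S)`, `s_φ([x_{ij}]) = ∑_{i,j} (φ(x_{ij}))_{ij}`. -/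
noncomputable def dualFunc {S : Submodule ℂ A} {n : ℕ}
    (φ : S →ₗ[ℂ] Matrix (Fin n) (Fin n) ℂ)
    (x : Matrix (Fin n) (Fin n) S) : ℂ :=
  ∑ i, ∑ j, φ (x i j) i j

/-- The cone `S⁺ ⊗ Mₙ(ℂ)⁺` inside `Mₙ(𝒜)`: finite sums `∑ sₗ ⊗ xₗ` with `sₗ ∈ S`
positive in `𝒜` and `xₗ` positive semidefinite. -/
def posCone (S : Submodule ℂ A) (n : ℕ) : Set (Matrix (Fin n) (Fin n) A) :=
  { T | ∃ (k : ℕ) (s : Fin k → A) (x : Fin k → Matrix (Fin n) (Fin n) ℂ),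
      (∀ l, s l ∈ S ∧ IsPosElem (s l)) ∧ (∀ l, IsPosElem (x l)) ∧
      T = ∑ l, Matrix.of fun p q => x l p q • s l }


set_option linter.unusedSectionVars false

/-! ### Positivity in `Mₖ(𝒜)` and in `Mₘ(Mₙ(ℂ))` -/

theorem isPosElem_star_mul_add {D : Type*} [CStarAlgebra D] (b c : D) :
    IsPosElem (star b * b + star c * c) := by
  let _ := CStarAlgebra.spectralOrder D
  have _ := CStarAlgebra.spectralOrderedRing D
  exact CStarAlgebra.nonneg_iff_eq_star_mul_self.mp
    (add_nonneg (star_mul_self_nonneg b) (star_mul_self_nonneg c))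

theorem isPosElem_add_norm {D : Type*} [CStarAlgebra D] (x : D) (hx : IsSelfAdjoint x) :
    IsPosElem (x + (‖x‖ : ℂ) • (1 : D)) := by
  let _ := CStarAlgebra.spectralOrder D
  have _ := CStarAlgebra.spectralOrderedRing D
  have h := CStarAlgebra.nonneg_iff_eq_star_mul_self.mp
    (neg_le_iff_add_nonneg'.mp hx.neg_algebraMap_norm_le_self)
  rwa [add_comm, Algebra.algebraMap_eq_smul_one] at h

/-- Sums of positive matrices are positive, because `Mₖ(𝒜)` carries the C⋆-algebra structure of
`CStarMatrix`. -/
theorem IsPosElem.add {k : ℕ} {X Y : Matrix (Fin k) (Fin k) A}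
    (hX : IsPosElem X) (hY : IsPosElem Y) : IsPosElem (X + Y) := by
  let _ : CStarAlgebra A := {}
  let _ := CStarAlgebra.spectralOrder A
  have _ := CStarAlgebra.spectralOrderedRing A
  obtain ⟨b, rfl⟩ := hX
  obtain ⟨c, rfl⟩ := hY
  exact isPosElem_star_mul_add (D := CStarMatrix (Fin k) (Fin k) A) b c

/-- The unit is an order unit of `Mₖ(𝒜)`. -/
theorem exists_isPosElem_add_smul_one {k : ℕ} {X : Matrix (Fin k) (Fin k) A} (hX : Xᴴ = X) :
    ∃ c : ℝ, 0 ≤ c ∧ IsPosElem (X + (c : ℂ) • (1 : Matrix (Fin k) (Fin k) A)) := by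
  let _ : CStarAlgebra A := {}
  let _ := CStarAlgebra.spectralOrder A
  have _ := CStarAlgebra.spectralOrderedRing A
  let Xc : CStarMatrix (Fin k) (Fin k) A := CStarMatrix.ofMatrix X
  exact ⟨‖Xc‖, norm_nonneg Xc, isPosElem_add_norm Xc hX⟩

theorem IsPosElem.smul {k : ℕ} {X : Matrix (Fin k) (Fin k) A}
    (hX : IsPosElem X) {c : ℝ} (hc : 0 ≤ c) : IsPosElem ((c : ℂ) • X) := by
  obtain ⟨b, rfl⟩ := hX
  refine ⟨(Real.sqrt c : ℂ) • b, ?_⟩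
  rw [star_smul, smul_mul_smul_comm, Complex.star_def, Complex.conj_ofReal, ← Complex.ofReal_mul,
    Real.mul_self_sqrt hc]

theorem isPosElem_zero {R : Type*} [Ring R] [StarRing R] : IsPosElem (0 : R) := ⟨0, by simp⟩

theorem IsPosElem.conjTranspose_eq {k : ℕ} {X : Matrix (Fin k) (Fin k) A} (hX : IsPosElem X) :
    Xᴴ = X := by
  obtain ⟨b, rfl⟩ := hX
  simp [← star_eq_conjTranspose]

theorem IsPosElem.sum {k : ℕ} {ι : Type*} (s : Finset ι) {X : ι → Matrix (Fin k) (Fin k) A}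
    (hX : ∀ i, IsPosElem (X i)) : IsPosElem (∑ i ∈ s, X i) := by
  classical
  induction s using Finset.induction_on with
  | empty => simpa using isPosElem_zero
  | insert a s ha ih => rw [Finset.sum_insert ha]; exact (hX a).add ih

/-- Rectangular Gram matrices are positive: `Cᴴ * C` is the sum over the rows of `C` of
the Gram matrices of those rows, each placed in a square matrix as its only nonzero row. -/
theorem isPosElem_conjTranspose_mul {m k : ℕ} (C : Matrix (Fin m) (Fin k) A) :
    IsPosElem (Cᴴ * C) := by
  rcases k with _ | k
  · exact ⟨0, Subsingleton.elim _ _⟩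
  have h : Cᴴ * C = ∑ l : Fin m, star (Matrix.of fun i j => if i = 0 then C l j else 0 :
      Matrix (Fin (k + 1)) (Fin (k + 1)) A) *
      (Matrix.of fun i j => if i = 0 then C l j else 0) := by
    ext i j
    simp [Matrix.mul_apply, Matrix.sum_apply, star_eq_conjTranspose, conjTranspose_apply]
  rw [h]
  exact IsPosElem.sum _ fun l => ⟨_, rfl⟩

/-- Positivity in `Mₘ(Mₙ(ℂ))` is positive semidefiniteness of the flattened `mn × mn` matrix. -/
theorem isPosElem_iff_posSemidef {m n : ℕ}
    (X : Matrix (Fin m) (Fin m) (Matrix (Fin n) (Fin n) ℂ)) :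
    IsPosElem X ↔ (Matrix.comp _ _ _ _ _ X).PosSemidef := by
  have key : ∀ b : Matrix (Fin m) (Fin m) (Matrix (Fin n) (Fin n) ℂ),
      Matrix.comp _ _ _ _ _ (star b * b) =
        (Matrix.comp _ _ _ _ _ b)ᴴ * Matrix.comp _ _ _ _ _ b := by
    intro b
    ext ⟨i, a⟩ ⟨j, c⟩
    simp [Matrix.mul_apply, Matrix.sum_apply, star_eq_conjTranspose, Fintype.sum_prod_type]
  constructor
  · rintro ⟨b, rfl⟩
    rw [key]
    exact posSemidef_conjTranspose_mul_self _
  · intro h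
    open scoped MatrixOrder Matrix.Norms.L2Operator in
    obtain ⟨B, hB⟩ := CStarAlgebra.nonneg_iff_eq_star_mul_self.mp h.nonneg
    refine ⟨(Matrix.comp _ _ _ _ _).symm B, (Matrix.comp _ _ _ _ _).injective ?_⟩
    rw [key, hB]
    simp [star_eq_conjTranspose]

/-! ### Extension of functionals -/

/-- Extension of a complex functional whose real part is nonnegative on a cone, from a complex
subspace meeting every translate of the cone. -/
theorem exists_extension_re_nonneg {E : Type*} [AddCommGroup E] [Module ℂ E]
    (C : PointedCone ℝ E) (D : Submodule ℂ E) (L : E →ₗ[ℂ] ℂ)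
    (hL : ∀ x ∈ D, x ∈ C → 0 ≤ (L x).re) (hD : ∀ y, ∃ x ∈ D, x + y ∈ C) :
    ∃ G : E →ₗ[ℂ] ℂ, (∀ x ∈ D, G x = L x) ∧ ∀ x ∈ C, 0 ≤ (G x).re := by
  let Lr : E →ₗ[ℝ] ℝ := Complex.reLm ∘ₗ L.restrictScalars ℝ
  let f : E →ₗ.[ℝ] ℝ := ⟨D.restrictScalars ℝ, Lr.comp (D.restrictScalars ℝ).subtype⟩
  obtain ⟨g, hg, hpos⟩ := riesz_extension C f (fun x hx => hL x x.2 hx) (fun y => by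
    obtain ⟨x, hx, h⟩ := hD y
    exact ⟨⟨x, hx⟩, h⟩)
  have hgre : ∀ x ∈ D, g x = (L x).re := fun x hx => hg ⟨x, hx⟩
  refine ⟨Module.Dual.extendRCLike (𝕜 := ℂ) g, fun x hx => ?_, fun x hx => ?_⟩
  · rw [Module.Dual.extendRCLike_apply]
    rw [hgre x hx, hgre _ (D.smul_mem _ hx), map_smul]
    apply Complex.ext <;> simp
  · rw [Module.Dual.extendRCLike_apply]
    simpa using hpos x hx

/-! ### Linear maps `S → Mₙ(ℂ)` and functionals on `Mₙ(S)` -/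

/-- The linear map `S → Mₙ(ℂ)` with `(i, j)` entry `a ↦ f (a ⊗ Eᵢⱼ)`; its dual functional
is `f`. -/
noncomputable def ofFunc {S : Submodule ℂ A} {n : ℕ} (f : Matrix (Fin n) (Fin n) S →ₗ[ℂ] ℂ) :
    S →ₗ[ℂ] Matrix (Fin n) (Fin n) ℂ where
  toFun a := Matrix.of fun i j => f (Matrix.single i j a)
  map_add' a b := by ext i j; simp [Matrix.single_add]
  map_smul' c a := by ext i j; simp [← Matrix.smul_single]

theorem ofFunc_apply {S : Submodule ℂ A} {n : ℕ} (f : Matrix (Fin n) (Fin n) S →ₗ[ℂ] ℂ)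
    (a : S) (i j : Fin n) : ofFunc f a i j = f (Matrix.single i j a) := rfl

theorem map_eq_sum_ofFunc {S : Submodule ℂ A} {n : ℕ} (f : Matrix (Fin n) (Fin n) S →ₗ[ℂ] ℂ)
    (X : Matrix (Fin n) (Fin n) S) : f X = ∑ i, ∑ j, ofFunc f (X i j) i j := by
  conv_lhs => rw [Matrix.matrix_eq_sum_single X]
  simp [ofFunc_apply]

/-- Over `ℂ`, nonnegativity of the quadratic form already forces the matrix to be hermitian. -/
theorem posSemidef_of_forall_nonneg {ι : Type*} [Fintype ι] (M : Matrix ι ι ℂ)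
    (h : ∀ v : ι → ℂ, 0 ≤ star v ⬝ᵥ (M *ᵥ v)) : M.PosSemidef := by
  classical
  rw [← Matrix.isPositive_toEuclideanLin_iff, LinearMap.isPositive_iff_complex]
  intro x
  have hx := h x.ofLp
  rw [Complex.le_def] at hx
  have : inner ℂ (M.toEuclideanLin x) x = star (star x.ofLp ⬝ᵥ (M *ᵥ x.ofLp)) := by
    rw [← inner_conj_symm, EuclideanSpace.inner_eq_star_dotProduct, dotProduct_comm]
    rfl
  rw [this]
  constructor
  · apply Complex.ext
    · simp
    · simpa using hx.2.symm
  · simpa using hx.1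

/-- A functional positive on `Mₙ(S)` comes from a completely positive map: the quadratic form of
`ψₘ(s)` at `v` is the value of the functional at the compression `Vᴴ s V`, where `V` is the
`m × n` matrix of scalars with entries `v`. -/
theorem isCPMap_ofFunc {S : Submodule ℂ A} {n : ℕ} (f : Matrix (Fin n) (Fin n) S →ₗ[ℂ] ℂ)
    (hf : ∀ X, IsPosElem (matCoe X) → 0 ≤ f X) : IsCPMap (ofFunc f) := by
  intro m s hs
  rw [isPosElem_iff_posSemidef]
  refine posSemidef_of_forall_nonneg _ fun v => ?_
  let X : Matrix (Fin n) (Fin n) S :=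
    Matrix.of fun a c => ∑ k, ∑ j, (star (v (j, a)) * v (k, c)) • s j k
  let V : Matrix (Fin m) (Fin n) A := Matrix.of fun k a => algebraMap ℂ A (v (k, a))
  obtain ⟨b, hb⟩ := hs
  have hX : matCoe X = (b * V)ᴴ * (b * V) := by
    have : (b * V)ᴴ * (b * V) = Vᴴ * matCoe s * V := by
      rw [hb, conjTranspose_mul, star_eq_conjTranspose]
      simp only [Matrix.mul_assoc]
    rw [this]
    ext a c
    simp only [matCoe, X, V, Matrix.mul_apply, conjTranspose_apply, of_apply,
      ← algebraMap_star_comm, Finset.sum_mul, Submodule.coe_sum, Submodule.coe_smul]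
    refine Finset.sum_congr rfl fun k _ => Finset.sum_congr rfl fun j _ => ?_
    rw [← Algebra.commutes, ← mul_assoc, ← map_mul, Algebra.smul_def, mul_comm (star _)]
  have h := hf X (hX ▸ isPosElem_conjTranspose_mul _)
  convert h using 1
  rw [map_eq_sum_ofFunc]
  simp only [X, of_apply, map_sum, map_smul, Matrix.sum_apply, Matrix.smul_apply, dotProduct,
    mulVec, Pi.star_apply, Fintype.sum_prod_type, Matrix.comp_apply, Matrix.map_apply,
    Finset.mul_sum, smul_eq_mul]
  -- Both sides are sums over `(j, a, k, c)`, nested in different orders.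
  rw [Finset.sum_comm]
  refine Finset.sum_congr rfl fun a _ => ?_
  calc _ = ∑ k, ∑ j, ∑ c, star (v (j, a)) * (ofFunc f (s j k) a c * v (k, c)) := Finset.sum_comm
    _ = ∑ k, ∑ c, ∑ j, star (v (j, a)) * (ofFunc f (s j k) a c * v (k, c)) :=
      Finset.sum_congr rfl fun k _ => Finset.sum_comm
    _ = ∑ c, ∑ k, ∑ j, star (v (j, a)) * (ofFunc f (s j k) a c * v (k, c)) := Finset.sum_comm
    _ = _ := by
      refine Finset.sum_congr rfl fun c _ => Finset.sum_congr rfl fun k _ =>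
        Finset.sum_congr rfl fun j _ => ?_
      ring

/-- The dual functional of `φ` as a linear map. -/
noncomputable def dualFuncLin {S : Submodule ℂ A} {n : ℕ}
    (φ : S →ₗ[ℂ] Matrix (Fin n) (Fin n) ℂ) : Matrix (Fin n) (Fin n) S →ₗ[ℂ] ℂ where
  toFun := dualFunc φ
  map_add' X Y := by simp [dualFunc, Finset.sum_add_distrib]
  map_smul' c X := by simp [dualFunc, Finset.mul_sum]

theorem dualFunc_nonneg {S : Submodule ℂ A} {n : ℕ} (φ : S →ₗ[ℂ] Matrix (Fin n) (Fin n) ℂ)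
    (X : Matrix (Fin n) (Fin n) S) (h : IsPosElem (X.map ⇑φ)) : 0 ≤ dualFunc φ X := by
  rw [isPosElem_iff_posSemidef] at h
  -- The dual functional is the quadratic form at the maximally entangled vector `∑ᵢ eᵢ ⊗ eᵢ`.
  have := h.dotProduct_mulVec_nonneg fun p => if p.1 = p.2 then 1 else 0
  simpa [dualFunc, dotProduct, mulVec, Fintype.sum_prod_type, apply_ite star] using this

/-- The cone of the pairs in `Mₙ(S) ⊕ Mₙ(S)` whose real parts are positive. Allowing arbitrary
skew-adjoint parts makes a complex subspace containing `(1, 1)` meet every translate of the cone. -/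
def reCone (S : Submodule ℂ A) (n : ℕ) :
    PointedCone ℝ (Matrix (Fin n) (Fin n) S × Matrix (Fin n) (Fin n) S) where
  carrier := {p | IsPosElem (matCoe p.1 + (matCoe p.1)ᴴ) ∧ IsPosElem (matCoe p.2 + (matCoe p.2)ᴴ)}
  zero_mem' := by
    have : matCoe (0 : Matrix (Fin n) (Fin n) S) = 0 := by ext; simp [matCoe]
    simp [this, isPosElem_zero]
  add_mem' {p q} hp hq := by
    have key : ∀ X Y : Matrix (Fin n) (Fin n) S, matCoe (X + Y) + (matCoe (X + Y))ᴴ =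
        (matCoe X + (matCoe X)ᴴ) + (matCoe Y + (matCoe Y)ᴴ) := by
      intro X Y
      ext i j
      simp [matCoe]
      abel
    refine ⟨?_, ?_⟩
    · rw [Prod.fst_add, key]; exact hp.1.add hq.1
    · rw [Prod.snd_add, key]; exact hp.2.add hq.2
  smul_mem' c p hp := by
    have key : ∀ X : Matrix (Fin n) (Fin n) S, matCoe (((c : ℝ) : ℂ) • X) +
        (matCoe (((c : ℝ) : ℂ) • X))ᴴ = ((c : ℝ) : ℂ) • (matCoe X + (matCoe X)ᴴ) := by
      intro X
      ext i j
      simp only [matCoe, Matrix.add_apply, conjTranspose_apply, of_apply, Matrix.smul_apply,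
        Submodule.coe_smul, star_smul, smul_add, Complex.star_def, Complex.conj_ofReal]
    have h1 := hp.1.smul c.2
    have h2 := hp.2.smul c.2
    rw [← key] at h1 h2
    exact ⟨h1, h2⟩

theorem mem_reCone {S : Submodule ℂ A} {n : ℕ} (X Y : Matrix (Fin n) (Fin n) S) :
    (X, Y) ∈ reCone S n ↔
      IsPosElem (matCoe X + (matCoe X)ᴴ) ∧ IsPosElem (matCoe Y + (matCoe Y)ᴴ) := Iff.rfl

/-! ### Functionals on `Mₙ(S)` that are nonnegative on `J_n(S)` -/

/-- The adjoint of a matrix over a self-adjoint subspace, as a matrix over that subspace. -/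
def adjS {S : Submodule ℂ A} (h_star : ∀ a ∈ S, star a ∈ S) {n : ℕ}
    (X : Matrix (Fin n) (Fin n) S) : Matrix (Fin n) (Fin n) S :=
  Matrix.of fun i j => ⟨star (X j i : A), h_star _ (X j i).2⟩

/-- The unit of `Mₙ(𝒜)`, as a matrix over a subspace containing the unit of `𝒜`. -/
noncomputable def oneS {S : Submodule ℂ A} (h_one : (1 : A) ∈ S) (n : ℕ) : Matrix (Fin n) (Fin n) S :=
  Matrix.diagonal fun _ => ⟨1, h_one⟩

theorem transpose_conjTranspose_comm {n : ℕ} (X : Matrix (Fin n) (Fin n) A) :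
    (Xᵀ)ᴴ = (Xᴴ)ᵀ := rfl

section MatCoe

variable {S : Submodule ℂ A} {n : ℕ}

theorem matCoe_add (X Y : Matrix (Fin n) (Fin n) S) : matCoe (X + Y) = matCoe X + matCoe Y := rfl

theorem matCoe_smul (c : ℂ) (X : Matrix (Fin n) (Fin n) S) : matCoe (c • X) = c • matCoe X := rfl

theorem matCoe_transpose (X : Matrix (Fin n) (Fin n) S) : matCoe Xᵀ = (matCoe X)ᵀ := rfl

theorem matCoe_adjS (h_star : ∀ a ∈ S, star a ∈ S) (X : Matrix (Fin n) (Fin n) S) :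
    matCoe (adjS h_star X) = (matCoe X)ᴴ := rfl

theorem matCoe_oneS (h_one : (1 : A) ∈ S) : matCoe (oneS h_one n) = 1 := by
  ext i j
  by_cases h : i = j <;> simp [matCoe, oneS, h, Matrix.one_apply]

theorem oneS_transpose (h_one : (1 : A) ∈ S) : (oneS h_one n)ᵀ = oneS h_one n :=
  Matrix.diagonal_transpose _

end MatCoe

theorem isPosElem_smul_one {k : ℕ} {c : ℝ} (hc : 0 ≤ c) :
    IsPosElem ((c : ℂ) • (1 : Matrix (Fin k) (Fin k) A)) :=
  IsPosElem.smul ⟨1, by simp⟩ hc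

theorem IsPosElem.add_smul_one_mono {k : ℕ} {X : Matrix (Fin k) (Fin k) A} {c d : ℝ}
    (h : IsPosElem (X + (c : ℂ) • (1 : Matrix (Fin k) (Fin k) A))) (hcd : c ≤ d) :
    IsPosElem (X + (d : ℂ) • (1 : Matrix (Fin k) (Fin k) A)) := by
  have := h.add (isPosElem_smul_one (k := k) (A := A) (sub_nonneg.mpr hcd))
  rwa [add_assoc, ← add_smul, ← Complex.ofReal_add, add_sub_cancel] at this

/-- Two self-adjoint matrices are made positive by the same multiple of the unit. -/
theorem exists_isPosElem_add_smul_one₂ {k : ℕ} {X Y : Matrix (Fin k) (Fin k) A}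
    (hX : Xᴴ = X) (hY : Yᴴ = Y) :
    ∃ c : ℝ, 0 ≤ c ∧ IsPosElem (X + (c : ℂ) • (1 : Matrix (Fin k) (Fin k) A)) ∧
      IsPosElem (Y + (c : ℂ) • (1 : Matrix (Fin k) (Fin k) A)) := by
  obtain ⟨c, hc, h⟩ := exists_isPosElem_add_smul_one hX
  obtain ⟨d, _, hd⟩ := exists_isPosElem_add_smul_one hY
  exact ⟨max c d, hc.trans (le_max_left _ _), h.add_smul_one_mono (le_max_left _ _),
    hd.add_smul_one_mono (le_max_right _ _)⟩

/-- A functional nonnegative on `J_n(S)` is real at self-adjoint elements, each of which is a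
difference of two elements of `J_n(S)`. -/
theorem im_eq_zero_of_selfAdjoint {S : Submodule ℂ A} (h_one : (1 : A) ∈ S) {n : ℕ}
    (F : Matrix (Fin n) (Fin n) S →ₗ[ℂ] ℂ) (hF : ∀ X, memJ X → 0 ≤ F X)
    (K : Matrix (Fin n) (Fin n) S) (hK : (matCoe K)ᴴ = matCoe K) : (F K).im = 0 := by
  have hKt : ((matCoe K)ᵀ)ᴴ = (matCoe K)ᵀ := by
    rw [transpose_conjTranspose_comm, hK]
  obtain ⟨c, hc, h1, h2⟩ := exists_isPosElem_add_smul_one₂ hK hKt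
  have hJ : memJ (K + (c : ℂ) • oneS h_one n) := by
    refine ⟨?_, ?_⟩
    · rwa [matCoe_add, matCoe_smul, matCoe_oneS]
    · rwa [matCoe_add, matCoe_smul, matCoe_oneS, transpose_add, transpose_smul, transpose_one]
  have hJone : memJ ((c : ℂ) • oneS h_one n) := by
    refine ⟨?_, ?_⟩
    · rw [matCoe_smul, matCoe_oneS]; exact isPosElem_smul_one hc
    · rw [matCoe_smul, matCoe_oneS, transpose_smul, transpose_one]; exact isPosElem_smul_one hc
  have e1 := (Complex.le_def.mp (hF _ hJ)).2
  have e2 := (Complex.le_def.mp (hF _ hJone)).2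
  rw [map_add, Complex.add_im, ← e2] at e1
  simpa using e1.symm

/-- The values on `Mₙ(S)⁺` of a functional with real part nonnegative on the elements with
positive real part: `± i X` has real part zero when `X` is self-adjoint. -/
theorem nonneg_of_re_nonneg {S : Submodule ℂ A} {n : ℕ} (F : Matrix (Fin n) (Fin n) S →ₗ[ℂ] ℂ)
    (hF : ∀ X, IsPosElem (matCoe X + (matCoe X)ᴴ) → 0 ≤ (F X).re)
    (X : Matrix (Fin n) (Fin n) S) (hX : IsPosElem (matCoe X)) : 0 ≤ F X := by
  have hs := hX.conjTranspose_eq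
  rw [Complex.le_def]
  refine ⟨hF X (by rw [hs]; exact hX.add hX), ?_⟩
  have h1 := hF (Complex.I • X) (by
    rw [matCoe_smul, conjTranspose_smul, hs]
    simpa using isPosElem_zero)
  have h2 := hF ((-Complex.I) • X) (by
    rw [matCoe_smul, conjTranspose_smul, hs]
    simpa using isPosElem_zero)
  simp only [map_smul, smul_eq_mul, Complex.mul_re, Complex.I_re, Complex.I_im, Complex.neg_re,
    Complex.neg_im] at h1 h2
  simp only [Complex.zero_im]
  linarith

/-- The co-completely positive summand is evaluated at the partial transpose of `s`; a full
transpose of the resulting complex matrix gives back the value at `s`. -/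
theorem isPosElem_map_of_isDecomposable {S : Submodule ℂ A} {n : ℕ}
    {φ : S →ₗ[ℂ] Matrix (Fin n) (Fin n) ℂ} (h : IsDecomposable φ) {m : ℕ}
    (s : Matrix (Fin m) (Fin m) S) (hs : memJ s) : IsPosElem (s.map ⇑φ) := by
  obtain ⟨ψ, η, hψ, hη, rfl⟩ := h
  have h1 := (isPosElem_iff_posSemidef _).mp (hψ m s hs.1)
  have h2 := ((isPosElem_iff_posSemidef _).mp (hη m sᵀ hs.2)).transpose
  exact (isPosElem_iff_posSemidef _).mpr (h1.add h2)

/-- A functional nonnegative on `J_n(S)` splits into a positive functional and the composition of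
a positive functional with the partial transpose. -/
theorem exists_splitting {S : Submodule ℂ A} (h_one : (1 : A) ∈ S)
    (h_star : ∀ a ∈ S, star a ∈ S) {n : ℕ} (F : Matrix (Fin n) (Fin n) S →ₗ[ℂ] ℂ)
    (hF : ∀ X, memJ X → 0 ≤ F X) :
    ∃ f g : Matrix (Fin n) (Fin n) S →ₗ[ℂ] ℂ,
      (∀ X, IsPosElem (matCoe X) → 0 ≤ f X) ∧ (∀ X, IsPosElem (matCoe X) → 0 ≤ g X) ∧
      ∀ X, F X = f X + g Xᵀ := by
  let T : Matrix (Fin n) (Fin n) S →ₗ[ℂ] Matrix (Fin n) (Fin n) S :=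
    (Matrix.transposeLinearEquiv (Fin n) (Fin n) ℂ S).toLinearMap
  let ι := LinearMap.prod LinearMap.id T
  obtain ⟨G, hG, hpos⟩ := exists_extension_re_nonneg (reCone S n) (LinearMap.range ι)
    (F ∘ₗ LinearMap.fst ℂ _ _) (by
      rintro _ ⟨X, rfl⟩ hX
      obtain ⟨h1, h2⟩ := (mem_reCone X Xᵀ).mp hX
      -- `2 X = (X + Xᴴ) + i K` with `K = -i (X - Xᴴ)` self-adjoint.
      have hJ : memJ (X + adjS h_star X) := by
        refine ⟨?_, ?_⟩
        · rwa [matCoe_add, matCoe_adjS]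
        · rwa [matCoe_add, matCoe_adjS, transpose_add, ← transpose_conjTranspose_comm,
            ← matCoe_transpose]
      have hK := im_eq_zero_of_selfAdjoint h_one F hF ((-Complex.I) • (X - adjS h_star X)) (by
        rw [sub_eq_add_neg, ← neg_one_smul ℂ (adjS h_star X), matCoe_smul, matCoe_add,
          matCoe_smul, matCoe_adjS]
        simp [conjTranspose_smul]
        abel)
      have hre := (Complex.le_def.mp (hF _ hJ)).1
      simp only [map_smul, map_sub, map_add, smul_eq_mul, Complex.mul_im, Complex.neg_re,
        Complex.neg_im, Complex.I_re, Complex.I_im, Complex.sub_re, Complex.add_re,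
        Complex.zero_re] at hK hre
      change 0 ≤ (F X).re
      linarith) (by
      rintro ⟨X, Y⟩
      obtain ⟨c, hc, h1, h2⟩ := exists_isPosElem_add_smul_one₂
        (X := matCoe X + (matCoe X)ᴴ) (Y := matCoe Y + (matCoe Y)ᴴ)
        (by simp [add_comm]) (by simp [add_comm])
      refine ⟨ι (((c / 2 : ℝ) : ℂ) • oneS h_one n), ⟨_, rfl⟩, ?_⟩
      have hι : ι (((c / 2 : ℝ) : ℂ) • oneS h_one n) =
          (((c / 2 : ℝ) : ℂ) • oneS h_one n, ((c / 2 : ℝ) : ℂ) • oneS h_one n) := by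
        refine Prod.ext rfl ?_
        change (((c / 2 : ℝ) : ℂ) • oneS h_one n)ᵀ = _
        rw [transpose_smul, oneS_transpose]
      have key : ∀ Z : Matrix (Fin n) (Fin n) S,
          matCoe (((c / 2 : ℝ) : ℂ) • oneS h_one n + Z) +
            (matCoe (((c / 2 : ℝ) : ℂ) • oneS h_one n + Z))ᴴ =
          matCoe Z + (matCoe Z)ᴴ + (c : ℂ) • (1 : Matrix (Fin n) (Fin n) A) := by
        intro Z
        have hc2 : (c : ℂ) = ((c / 2 : ℝ) : ℂ) + ((c / 2 : ℝ) : ℂ) := by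
          rw [← Complex.ofReal_add, add_halves]
        rw [matCoe_add, matCoe_smul, matCoe_oneS, conjTranspose_add, conjTranspose_smul,
          conjTranspose_one, Complex.star_def, Complex.conj_ofReal, hc2, add_smul]
        abel
      rw [hι, Prod.mk_add_mk, mem_reCone, key, key]
      exact ⟨h1, h2⟩)
  refine ⟨G ∘ₗ LinearMap.inl ℂ _ _, G ∘ₗ LinearMap.inr ℂ _ _, ?_, ?_, fun X => ?_⟩
  · refine nonneg_of_re_nonneg _ fun X hX => hpos (X, 0) ((mem_reCone _ _).mpr ⟨hX, ?_⟩)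
    have : matCoe (0 : Matrix (Fin n) (Fin n) S) = 0 := rfl
    simpa [this] using isPosElem_zero
  · refine nonneg_of_re_nonneg _ fun X hX => hpos (0, X) ((mem_reCone _ _).mpr ⟨?_, hX⟩)
    have : matCoe (0 : Matrix (Fin n) (Fin n) S) = 0 := rfl
    simpa [this] using isPosElem_zero
  · have h := hG (X, Xᵀ) ⟨X, rfl⟩
    have hs : ((X, Xᵀ) : Matrix (Fin n) (Fin n) S × Matrix (Fin n) (Fin n) S) =
        (X, 0) + (0, Xᵀ) := by simp
    rw [hs, map_add] at h
    simpa using h.symm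

/-- `φ` is decomposable iff `φ_m(S) ⪰ 0` for every `m` and every `S ∈ J_m(S)`. -/
theorem decomposable_iff_posElem_on_J
    (S : Submodule ℂ A) (h_one : (1 : A) ∈ S) (h_star : ∀ a ∈ S, star a ∈ S)
    (n : ℕ) (φ : S →ₗ[ℂ] Matrix (Fin n) (Fin n) ℂ) :
    IsDecomposable φ ↔
      (∀ (m : ℕ) (s : Matrix (Fin m) (Fin m) S), memJ s → IsPosElem (s.map ⇑φ)) := by
  refine ⟨fun h m s hs => isPosElem_map_of_isDecomposable h s hs, fun h => ?_⟩
  obtain ⟨f, g, hf, hg, hfg⟩ := exists_splitting h_one h_star (dualFuncLin φ)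
    fun X hX => dualFunc_nonneg φ X (h n X hX)
  let t : Matrix (Fin n) (Fin n) ℂ →ₗ[ℂ] Matrix (Fin n) (Fin n) ℂ :=
    (Matrix.transposeLinearEquiv (Fin n) (Fin n) ℂ ℂ).toLinearMap
  refine ⟨ofFunc f, t ∘ₗ ofFunc g, isCPMap_ofFunc f hf, ?_, ?_⟩
  · exact isCPMap_ofFunc g hg
  · ext a i j
    have h1 : dualFunc φ (Matrix.single i j a) = φ a i j := by
      have : ∀ k l, φ (Matrix.single i j a k l) k l = if i = k ∧ j = l then φ a i j else 0 := by
        intro k l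
        by_cases hkl : i = k ∧ j = l
        · obtain ⟨rfl, rfl⟩ := hkl; simp
        · simp [hkl]
      simp [dualFunc, this, ite_and]
    have h2 := hfg (Matrix.single i j a)
    rw [Matrix.transpose_single] at h2
    exact h1.symm.trans h2
end

section
/- Let 𝒜 be a unital C*-algebra, 𝒮 ⊆ 𝒜 an operator system, and φ: 𝒮 → M_n(ℂ) a linear map. If the dual functional s_φ satisfies s_φ(T) ≥ 0 for every T ∈ J_n(𝒮), then for every positive integer m and every S = [s_{jk}] ∈ J_m(𝒮), the matrix φ_m(S) = [φ(s_{jk})] is positive semidefinite. -/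
/-!
Fix `x ∈ ℂᵐ ⊗ ℂⁿ`, viewed as a scalar `m × n` matrix `X`, and put `T = X* s X ∈ Mₙ(S)`. Then
`⟨x, φ_m(s) x⟩ = s_φ(T)`, so it is enough to see that `T ∈ Jₙ(S)`. If `s = b* b` then
`T = (bX)* (bX)`, and the partial transpose of `T` is `X̄* sᵗ X̄`, which has the same shape. The only
point at issue is that `bX` is rectangular, whereas positivity in `Mₙ(𝒜)` asks for a square
factor: `(bX)* (bX)` is a sum of squares in the C*-algebra `Mₙ(𝒜)`, one for each row of `bX`, hence
is itself a square (`isPosElem_of_rect`).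
-/

open scoped ComplexOrder
open Matrix

variable {A : Type*} [NormedRing A] [StarRing A] [CStarRing A]
  [CompleteSpace A] [NormedAlgebra ℂ A] [StarModule ℂ A]

lemma isPosElem_sum_star_mul_self {E : Type*} [CStarAlgebra E] {m : ℕ} (D : Fin m → E) :
    IsPosElem (∑ j, star (D j) * D j) := by
  let order : PartialOrder E := CStarAlgebra.spectralOrder E
  have : StarOrderedRing E := CStarAlgebra.spectralOrderedRing E
  exact CStarAlgebra.nonneg_iff_eq_star_mul_self.mp
    (Finset.sum_nonneg fun j _ => star_mul_self_nonneg (D j))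

/-- For a rectangular matrix `C` over a C*-algebra, `C* C` is positive in the square matrix
algebra: it is the sum over the rows of `C` of `D* D`, where `D` is the square matrix carrying that
row as its first row and zeros elsewhere. -/
lemma isPosElem_of_rect_aux {B : Type*} [CStarAlgebra B] [PartialOrder B] [StarOrderedRing B]
    {m n : ℕ} (C : Matrix (Fin m) (Fin n) B) : IsPosElem (Cᴴ * C) := by
  cases n with
  | zero => exact ⟨0, Subsingleton.elim _ _⟩
  | succ n =>
    let D : Fin m → CStarMatrix (Fin (n + 1)) (Fin (n + 1)) B := fun j =>
      CStarMatrix.ofMatrix (Matrix.of fun p q => if p = 0 then C j q else 0)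
    obtain ⟨b, hb⟩ := isPosElem_sum_star_mul_self D
    refine ⟨CStarMatrix.ofMatrix.symm b, ?_⟩
    have h1 : CStarMatrix.ofMatrix (Cᴴ * C) = ∑ j, star (D j) * D j := by
      have hD : ∀ j, star (D j) * D j =
          CStarMatrix.ofMatrix (Matrix.of fun p q => star (C j p) * C j q) := by
        intro j
        ext p q
        rw [CStarMatrix.mul_apply, Finset.sum_eq_single 0]
        · simp [D, CStarMatrix.star_apply]
        · intro r _ hr
          simp [D, CStarMatrix.star_apply, hr]
        · simp
      have hsum : ∀ (f : Fin m → Matrix (Fin (n + 1)) (Fin (n + 1)) B),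
          ∑ j, CStarMatrix.ofMatrix (f j) = CStarMatrix.ofMatrix (∑ j, f j) :=
        fun f => rfl
      simp only [hD]
      rw [hsum]
      congr 1
      ext p q
      simp [Matrix.mul_apply, Matrix.sum_apply]
    exact h1.trans hb

/-- The case of `A` itself, which is given its spectral order; the conclusion does not depend on
any order. -/
lemma isPosElem_of_rect {m n : ℕ} (C : Matrix (Fin m) (Fin n) A) :
    IsPosElem (Cᴴ * C) := by
  let cstar : CStarAlgebra A := {}
  let order : PartialOrder A := CStarAlgebra.spectralOrder A
  have : StarOrderedRing A := CStarAlgebra.spectralOrderedRing A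
  exact isPosElem_of_rect_aux C

/-- Compression of a positive matrix over `A` by a scalar rectangular matrix is positive. -/
lemma isPosElem_compress {m n : ℕ} (M : Matrix (Fin m) (Fin m) A) (hM : IsPosElem M)
    (X : Matrix (Fin m) (Fin n) ℂ) :
    IsPosElem (Matrix.of fun p q => ∑ j, ∑ k, (star (X j p) * X k q) • M j k) := by
  obtain ⟨b, rfl⟩ := hM
  have h := isPosElem_of_rect (b * X.map (algebraMap ℂ A))
  convert h using 1
  rw [Matrix.conjTranspose_mul, Matrix.mul_assoc, ← Matrix.mul_assoc bᴴ]
  ext p q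
  simp only [Matrix.of_apply, Matrix.mul_apply (M := (X.map (algebraMap ℂ A))ᴴ),
    Matrix.mul_apply (N := X.map (algebraMap ℂ A)), Finset.mul_sum, Matrix.conjTranspose_apply,
    Matrix.map_apply, ← algebraMap_star_comm, Matrix.star_eq_conjTranspose]
  refine Finset.sum_congr rfl fun j _ => Finset.sum_congr rfl fun k _ => ?_
  rw [← Algebra.commutes (X k q), ← Algebra.smul_def, ← Algebra.smul_def, smul_smul]

/-- Over `ℂ` nonnegativity of the quadratic form already forces the matrix to be Hermitian. -/
lemma posSemidef_of_quadForm_nonneg {ι : Type*} [Fintype ι]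
    (M : Matrix ι ι ℂ) (h : ∀ x : ι → ℂ, 0 ≤ star x ⬝ᵥ (M *ᵥ x)) : M.PosSemidef := by
  classical
  rw [← Matrix.isPositive_toEuclideanLin_iff, LinearMap.isPositive_iff_complex]
  intro x
  have hx := h x.ofLp
  have e : inner ℂ (M.toEuclideanLin x) x = star (star x.ofLp ⬝ᵥ (M *ᵥ x.ofLp)) := by
    rw [← inner_conj_symm, EuclideanSpace.inner_eq_star_dotProduct, dotProduct_comm]
    rfl
  have hx' := star_nonneg_iff.mpr hx
  rw [← e] at hx'
  obtain ⟨h1, h2⟩ := RCLike.nonneg_iff.mp hx'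
  refine ⟨?_, h1⟩
  exact RCLike.conj_eq_iff_re.mp (RCLike.conj_eq_iff_im.mpr h2)

open scoped MatrixOrder in
/-- Positivity in `Mₘ(Mₙ(ℂ))` may be tested on the flattened `mn × mn` scalar matrix. -/
lemma isPosElem_of_comp_posSemidef {m n : ℕ}
    (M : Matrix (Fin m) (Fin m) (Matrix (Fin n) (Fin n) ℂ))
    (h : (Matrix.comp (Fin m) (Fin m) (Fin n) (Fin n) ℂ M).PosSemidef) : IsPosElem M := by
  obtain ⟨B, hB⟩ := CStarAlgebra.nonneg_iff_eq_star_mul_self.mp h.nonneg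
  refine ⟨(Matrix.comp _ _ _ _ ℂ).symm B, ?_⟩
  apply (Matrix.compRingEquiv (Fin m) (Fin n) ℂ).injective
  rw [map_mul]
  exact hB

/-- if the dual functional of `φ` is nonnegative on `Jₙ(S)`, then
`φ_m(S) ⪰ 0` for every `m` and every `S ∈ J_m(S)`. -/
theorem posElem_on_J_of_dualFunc_nonneg
    (S : Submodule ℂ A) (h_one : (1 : A) ∈ S) (h_star : ∀ a ∈ S, star a ∈ S)
    (n : ℕ) (φ : S →ₗ[ℂ] Matrix (Fin n) (Fin n) ℂ)
    (hφ : ∀ T : Matrix (Fin n) (Fin n) S, memJ T → 0 ≤ dualFunc φ T) :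
    ∀ (m : ℕ) (s : Matrix (Fin m) (Fin m) S), memJ s → IsPosElem (s.map ⇑φ) := by
  intro m s hs
  apply isPosElem_of_comp_posSemidef
  apply posSemidef_of_quadForm_nonneg
  intro x
  let T : Matrix (Fin n) (Fin n) S :=
    Matrix.of fun p q => ∑ j, ∑ k, (star (x (j, p)) * x (k, q)) • s j k
  have hT : memJ T := by
    constructor
    · convert isPosElem_compress _ hs.1 (Matrix.of fun j p => x (j, p)) using 1
      ext p q
      simp [T, matCoe]
    · -- transposing `X* s X` turns `X` into its entrywise conjugate
      convert isPosElem_compress _ hs.2 (Matrix.of fun j p => star (x (j, p))) using 1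
      ext p q
      simp only [T, matCoe, Matrix.transpose_apply, Matrix.of_apply, star_star]
      rw [Finset.sum_comm]
      simp [mul_comm]
  have key : star x ⬝ᵥ (Matrix.comp _ _ _ _ ℂ (s.map φ) *ᵥ x) = dualFunc φ T := by
    simp only [dualFunc, T, dotProduct, Matrix.mulVec, Matrix.of_apply, map_sum, map_smul,
      Matrix.sum_apply, Matrix.smul_apply, Fintype.sum_prod_type, Matrix.comp_apply,
      Matrix.map_apply, Pi.star_apply, Finset.mul_sum, smul_eq_mul]
    rw [Finset.sum_comm]
    refine Finset.sum_congr rfl fun p _ => ?_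
    rw [Finset.sum_comm (s := Finset.univ (α := Fin n))]
    refine Finset.sum_congr rfl fun j _ => ?_
    rw [Finset.sum_comm]
    refine Finset.sum_congr rfl fun q _ => Finset.sum_congr rfl fun k _ => ?_
    ring
  rw [key]
  exact hφ T hT
end

section
/- For every real μ ≥ 1, the Choi-type map φ: M_3(ℂ) → M_3(ℂ) defined by φ([x_{ij}]) = [[x_{11}, −x_{12}, −x_{13}], [−x_{21}, x_{22}, −x_{23}], [−x_{31}, −x_{32}, x_{33}]] + μ·diag(x_{33}, x_{11}, x_{22}) is not decomposable: there do not exist a completely positive map ψ and a co-cp map η with φ = ψ + η. -/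
/-!
Suppose `φ = ψ + η` with `ψ` cp and `η` co-cp, where `φ` is the Choi-type map, and write `E i j` for
the matrix units. Applying `ψ` and `transpose ∘ η` to the positive block matrix `[E i j]` gives
positive block matrices, hence Gram representations `ψ(E i j)_{kl} = ⟨β i k, β j l⟩` and
`η(E i j)_{lk} = ⟨γ i k, γ j l⟩` (lemma `gram_of_isPosElem`).

Since `φ(E i i)_{kk} = 0` for `k = i + 2` mod `3`, and the corresponding diagonal entries of `ψ` and
`η` are nonnegative, `γ i k = 0` for these `(i, k)`. For `i ≠ j` one of `(i, j)`, `(j, i)` is of this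
form, so `η(E i j)_{ij} = ⟨γ i j, γ j i⟩ = 0` and `ψ(E i j)_{ij} = φ(E i j)_{ij} = -1`.
Moreover `ψ(E i i)_{ii} ≤ φ(E i i)_{ii} = 1`. Therefore
`0 ≤ ‖∑ i, β i i‖² = ∑ i j, ψ(E i j)_{ij} ≤ 3 - 6 < 0`, a contradiction.
-/

open Matrix

/-- Complete positivity for a linear map `φ : M_3(ℂ) → M_3(ℂ)`. -/
def IsCPMap3 (φ : Matrix (Fin 3) (Fin 3) ℂ →ₗ[ℂ] Matrix (Fin 3) (Fin 3) ℂ) : Prop :=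
  ∀ (m : ℕ) (s : Matrix (Fin m) (Fin m) (Matrix (Fin 3) (Fin 3) ℂ)),
    IsPosElem s → IsPosElem (s.map ⇑φ)

/-- `φ` is co-completely positive if `transpose ∘ φ` is completely positive. -/
def IsCoCPMap3 (φ : Matrix (Fin 3) (Fin 3) ℂ →ₗ[ℂ] Matrix (Fin 3) (Fin 3) ℂ) : Prop :=
  ∀ (m : ℕ) (s : Matrix (Fin m) (Fin m) (Matrix (Fin 3) (Fin 3) ℂ)),
    IsPosElem s → IsPosElem (s.map fun a => (φ a)ᵀ)

/-- The Choi-type map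
`φ([x_{ij}]) = [[x₁₁, -x₁₂, -x₁₃], [-x₂₁, x₂₂, -x₂₃], [-x₃₁, -x₃₂, x₃₃]]
  + μ·diag(x₃₃, x₁₁, x₂₂)`. -/
noncomputable def choiFun (μ : ℝ) (x : Matrix (Fin 3) (Fin 3) ℂ) :
    Matrix (Fin 3) (Fin 3) ℂ :=
  Matrix.of (fun i j => if i = j then x i i else -x i j) +
    (μ : ℂ) • Matrix.diagonal ![x 2 2, x 0 0, x 1 1]

open scoped ComplexOrder

/-- The block matrix `[E i j]` of matrix units (the unnormalised maximally entangled projection). -/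
noncomputable def unitBlocks : Matrix (Fin 3) (Fin 3) (Matrix (Fin 3) (Fin 3) ℂ) :=
  Matrix.of fun i j => Matrix.single i j 1

lemma isPosElem_unitBlocks : IsPosElem unitBlocks := by
  -- The square root is the block row `(E 0 0, E 0 1, E 0 2)`, padded by zero rows.
  refine ⟨Matrix.of fun i j => if i = 0 then Matrix.single 0 j 1 else 0, ?_⟩
  ext1 i j
  simp [unitBlocks, Matrix.mul_apply, Matrix.star_eq_conjTranspose]

/-- A positive block matrix is a Gram matrix: the vector `γ i k` is the column `(i, k)` of a square
root. -/
lemma gram_of_isPosElem {s : Matrix (Fin 3) (Fin 3) (Matrix (Fin 3) (Fin 3) ℂ)}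
    (hs : IsPosElem s) :
    ∃ γ : Fin 3 → Fin 3 → (Fin 3 × Fin 3 → ℂ),
      ∀ i j k l, s i j k l = star (γ i k) ⬝ᵥ γ j l := by
  obtain ⟨b, rfl⟩ := hs
  refine ⟨fun i k p => b p.1 i p.2 k, fun i j k l => ?_⟩
  simp [Matrix.mul_apply, Matrix.star_apply, Matrix.sum_apply, dotProduct, Fintype.sum_prod_type]

/-- for `μ ≥ 1` the Choi-type map is not decomposable. -/
theorem choiFun_not_decomposable (μ : ℝ) (hμ : 1 ≤ μ) :
    ¬ ∃ ψ η : Matrix (Fin 3) (Fin 3) ℂ →ₗ[ℂ] Matrix (Fin 3) (Fin 3) ℂ,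
        IsCPMap3 ψ ∧ IsCoCPMap3 η ∧ ∀ x, choiFun μ x = ψ x + η x := by
  rintro ⟨ψ, η, hψ, hη, h⟩
  obtain ⟨β, hβ⟩ := gram_of_isPosElem (hψ 3 _ isPosElem_unitBlocks)
  obtain ⟨γ, hγ⟩ := gram_of_isPosElem (hη 3 _ isPosElem_unitBlocks)
  have key (i j k l : Fin 3) : choiFun μ (Matrix.single i j 1) k l
      = star (β i k) ⬝ᵥ β j l + star (γ i l) ⬝ᵥ γ j k := by
    rw [← hβ, ← hγ, h]
    rfl
  have hzero (i k : Fin 3) (hik : choiFun μ (Matrix.single i i 1) k k = 0) : γ i k = 0 := by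
    rw [key] at hik
    exact dotProduct_star_self_eq_zero.mp ((add_eq_zero_iff_of_nonneg
      (dotProduct_star_self_nonneg _) (dotProduct_star_self_nonneg _)).mp hik).2
  have g02 : γ 0 2 = 0 := hzero 0 2 (by simp [choiFun, Matrix.single])
  have g10 : γ 1 0 = 0 := hzero 1 0 (by simp [choiFun, Matrix.single])
  have g21 : γ 2 1 = 0 := hzero 2 1 (by simp [choiFun, Matrix.single])
  have hoff (i j : Fin 3) (hij : i ≠ j) : star (β i i) ⬝ᵥ β j j = -1 := by
    have hη0 : star (γ i j) ⬝ᵥ γ j i = 0 := by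
      fin_cases i <;> fin_cases j <;> simp [g02, g10, g21] at hij ⊢
    have := key i j i j
    rw [hη0, add_zero] at this
    rw [← this]
    simp [choiFun, hij]
  have hdiag (i : Fin 3) : star (β i i) ⬝ᵥ β i i ≤ 1 := by
    have h1 : choiFun μ (Matrix.single i i 1) i i = 1 := by
      fin_cases i <;> simp [choiFun, Matrix.single]
    rw [← h1, key]
    exact le_add_of_nonneg_right (dotProduct_star_self_nonneg _)
  have hnn : (0 : ℂ) ≤ star (β 0 0 + β 1 1 + β 2 2) ⬝ᵥ (β 0 0 + β 1 1 + β 2 2) :=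
    dotProduct_star_self_nonneg _
  simp only [star_add, add_dotProduct, dotProduct_add] at hnn
  rw [hoff 0 1 (by decide), hoff 0 2 (by decide), hoff 1 0 (by decide), hoff 1 2 (by decide),
    hoff 2 0 (by decide), hoff 2 1 (by decide)] at hnn
  have e0 := (Complex.le_def.mp (hdiag 0)).1
  have e1 := (Complex.le_def.mp (hdiag 1)).1
  have e2 := (Complex.le_def.mp (hdiag 2)).1
  have e := (Complex.le_def.mp hnn).1
  simp only [Complex.add_re, Complex.neg_re, Complex.one_re, Complex.zero_re] at e0 e1 e2 e
  linarith
end
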